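/- arXiv:1810.03869 — 6 statements merged into one kernel-verified Lean document; each statement's English description precedes it below -/
import Mathlib

section
/- Let q : [0,T] → ℝ⁵ be an admissible trajectory of the Cartan control system with q(0) = 0 whose control satisfies u_i(t) = s for a.e. t ∈ [0,T], for some fixed index i ∈ {1,2} and sign s ∈ {1,−1}. Then q is time-optimal: every admissible trajectory of the Cartan control system defined on [0,T'] from 0 to q(T) satisfies T' ≥ T. -/
open MeasureTheory Set

/-- The Cartan control system ODE on `ℝ⁵` with coordinates `(x,y,z,v,w)`. -/
def CartanOde (x y z v w u1 u2 : ℝ → ℝ) (t : ℝ) : Prop :=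
  HasDerivAt x (u1 t) t ∧ HasDerivAt y (u2 t) t ∧
  HasDerivAt z ((x t * u2 t - y t * u1 t) / 2) t ∧
  HasDerivAt v (u2 t * (x t ^ 2 + y t ^ 2) / 2) t ∧
  HasDerivAt w (-(u1 t) * (x t ^ 2 + y t ^ 2) / 2) t

/-- An admissible trajectory of the Cartan control system on `[0,T]`. -/
def IsAdmissible (T : ℝ) (x y z v w u1 u2 : ℝ → ℝ) : Prop :=
  (∃ K, LipschitzOnWith K (fun t => (x t, y t, z t, v t, w t)) (Icc 0 T)) ∧
  Measurable u1 ∧ Measurable u2 ∧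
  (∀ᵐ t ∂(volume.restrict (Icc 0 T)),
    max |u1 t| |u2 t| ≤ 1 ∧ CartanOde x y z v w u1 u2 t)

/-- `Reach q1 T` : the point `q1` is reachable from the origin in time `T ≥ 0`. -/
def Reach (q1 : ℝ × ℝ × ℝ × ℝ × ℝ) (T : ℝ) : Prop :=
  0 ≤ T ∧ ∃ x y z v w u1 u2 : ℝ → ℝ,
    IsAdmissible T x y z v w u1 u2 ∧
    (x 0, y 0, z 0, v 0, w 0) = (0, 0, 0, 0, 0) ∧
    (x T, y T, z T, v T, w T) = q1

/-! Both `x` and `y` obey the scalar control system `f' = u`, `|u| ≤ 1`, whose trajectories move at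
speed at most one. A constant control `±1` covers distance exactly `T` in time `T`, so no
trajectory with the same endpoints can be faster; the coordinates `z`, `v`, `w` only restrict the
competitors further. -/

theorem integral_eq_sub_of_ae_hasDerivAt {f f' : ℝ → ℝ} {a b : ℝ}
    (hf : AbsolutelyContinuousOnInterval f a b)
    (hderiv : ∀ᵐ t ∂(volume.restrict (uIoc a b)), HasDerivAt f (f' t) t) :
    ∫ t in a..b, f' t = f b - f a := by
  rw [← hf.integral_deriv_eq_sub]
  exact intervalIntegral.integral_congr_ae_restrict (hderiv.mono fun t ht => ht.deriv.symm)

/-- Trajectories on `[0,T]` of the scalar system `f' = u`, `|u| ≤ 1`: what the Cartan system becomes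
when only `x` or only `y` is kept. Absolute continuity replaces the Lipschitz condition of
`IsAdmissible`, because it suffices for the fundamental theorem of calculus. -/
structure IsIntegratorTrajectory (T : ℝ) (f u : ℝ → ℝ) : Prop where
  absolutelyContinuous : AbsolutelyContinuousOnInterval f 0 T
  abs_control_le_one : ∀ᵐ t ∂(volume.restrict (Icc 0 T)), |u t| ≤ 1
  hasDerivAt : ∀ᵐ t ∂(volume.restrict (Icc 0 T)), HasDerivAt f (u t) t

namespace IsIntegratorTrajectory

variable {T T' s : ℝ} {f g u u' : ℝ → ℝ}

theorem integral_control (h : IsIntegratorTrajectory T f u) (hT : 0 ≤ T) :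
    ∫ t in 0..T, u t = f T - f 0 := by
  refine integral_eq_sub_of_ae_hasDerivAt h.absolutelyContinuous ?_
  rw [uIoc_of_le hT, restrict_Ioc_eq_restrict_Icc]
  exact h.hasDerivAt

theorem abs_sub_le (h : IsIntegratorTrajectory T f u) (hT : 0 ≤ T) : |f T - f 0| ≤ T := by
  have hbound : ∀ᵐ t, t ∈ uIoc 0 T → ‖u t‖ ≤ 1 := by
    filter_upwards [ae_imp_of_ae_restrict h.abs_control_le_one] with t ht htT
    exact ht (Ioc_subset_Icc_self (uIoc_of_le hT ▸ htT))
  calc |f T - f 0| = ‖∫ t in 0..T, u t‖ := by rw [h.integral_control hT, Real.norm_eq_abs]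
    _ ≤ 1 * |T - 0| := intervalIntegral.norm_integral_le_of_norm_le_const_ae hbound
    _ = T := by rw [one_mul, sub_zero, abs_of_nonneg hT]

theorem sub_eq_mul_of_control_ae_eq (h : IsIntegratorTrajectory T f u) (hT : 0 ≤ T)
    (hu : ∀ᵐ t ∂(volume.restrict (Icc 0 T)), u t = s) : f T - f 0 = T * s := by
  have hu' : u =ᵐ[volume.restrict (uIoc 0 T)] fun _ => s := by
    rwa [uIoc_of_le hT, restrict_Ioc_eq_restrict_Icc]
  rw [← h.integral_control hT, intervalIntegral.integral_congr_ae_restrict hu',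
    intervalIntegral.integral_const, sub_zero, smul_eq_mul]

theorem time_le_of_control_ae_eq (hf : IsIntegratorTrajectory T f u)
    (hg : IsIntegratorTrajectory T' g u') (hT : 0 ≤ T) (hT' : 0 ≤ T') (hs : |s| = 1)
    (hu : ∀ᵐ t ∂(volume.restrict (Icc 0 T)), u t = s) (hstart : g 0 = f 0) (hend : g T' = f T) :
    T ≤ T' :=
  calc T = |T * s| := by rw [abs_mul, hs, mul_one, abs_of_nonneg hT]
    _ = |g T' - g 0| := by rw [hstart, hend, hf.sub_eq_mul_of_control_ae_eq hT hu]
    _ ≤ T' := hg.abs_sub_le hT'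

end IsIntegratorTrajectory

namespace IsAdmissible

variable {T : ℝ} {x y z v w u1 u2 : ℝ → ℝ}

theorem isIntegratorTrajectory_x (h : IsAdmissible T x y z v w u1 u2) (hT : 0 ≤ T) :
    IsIntegratorTrajectory T x u1 := by
  obtain ⟨⟨K, hK⟩, -, -, hode⟩ := h
  rw [← uIcc_of_le hT] at hK
  exact
    { absolutelyContinuous :=
        (LipschitzWith.prod_fst.comp_lipschitzOnWith hK).absolutelyContinuousOnInterval
      abs_control_le_one := hode.mono fun t ht => (le_max_left _ _).trans ht.1
      hasDerivAt := hode.mono fun t ht => ht.2.1 }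

theorem isIntegratorTrajectory_y (h : IsAdmissible T x y z v w u1 u2) (hT : 0 ≤ T) :
    IsIntegratorTrajectory T y u2 := by
  obtain ⟨⟨K, hK⟩, -, -, hode⟩ := h
  rw [← uIcc_of_le hT] at hK
  exact
    { absolutelyContinuous := ((LipschitzWith.prod_fst.comp
        LipschitzWith.prod_snd).comp_lipschitzOnWith hK).absolutelyContinuousOnInterval
      abs_control_le_one := hode.mono fun t ht => (le_max_right _ _).trans ht.1
      hasDerivAt := hode.mono fun t ht => ht.2.2.1 }

end IsAdmissible

/-- A trajectory from the origin one of whose control components is a.e. constantly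
equal to `1` or to `−1` is time-optimal. -/
theorem constant_component_control_is_optimal
    (T : ℝ) (hT : 0 ≤ T) (x y z v w u1 u2 : ℝ → ℝ) (s : ℝ)
    (hs : s = 1 ∨ s = -1)
    (htraj : IsAdmissible T x y z v w u1 u2)
    (hstart : (x 0, y 0, z 0, v 0, w 0) = (0, 0, 0, 0, 0))
    (hconst : (∀ᵐ t ∂(volume.restrict (Icc 0 T)), u1 t = s) ∨
              (∀ᵐ t ∂(volume.restrict (Icc 0 T)), u2 t = s)) :
    ∀ T' : ℝ, Reach (x T, y T, z T, v T, w T) T' → T ≤ T' := by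
  rintro T' ⟨hT', x', y', z', v', w', u1', u2', htraj', hstart', hend'⟩
  have hs_abs : |s| = 1 := (abs_eq zero_le_one).2 hs
  have hstarts := hstart'.trans hstart.symm
  simp only [Prod.mk.injEq] at hstarts hend'
  obtain ⟨hx_start, hy_start, -⟩ := hstarts
  obtain ⟨hx_end, hy_end, -⟩ := hend'
  rcases hconst with hu1 | hu2
  · exact (htraj.isIntegratorTrajectory_x hT).time_le_of_control_ae_eq
      (htraj'.isIntegratorTrajectory_x hT') hT hT' hs_abs hu1 hx_start hx_end
  · exact (htraj.isIntegratorTrajectory_y hT).time_le_of_control_ae_eq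
      (htraj'.isIntegratorTrajectory_y hT') hT hT' hs_abs hu2 hy_start hy_end
end

section
/- Let q : [0,T] → ℝ⁵ be an admissible trajectory of the Cartan control system from 0 to a point q1, whose control satisfies max(|u1(t)|,|u2(t)|) < 1 on a subset of [0,T] of positive Lebesgue measure. Then q is not time-optimal: there exist T' < T and an admissible trajectory of the Cartan control system from 0 to q1 defined on [0,T']. Equivalently, every time-optimal control satisfies max(|u1(t)|,|u2(t)|) = 1 for a.e. t. -/
open MeasureTheory Set

/-!
Traverse the same curve faster. If a measurable function `r` with `0 < c ≤ r ≤ C` dominates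
`max |u₁| |u₂|`, then `σ t = ∫₀ᵗ r` is a bi-Lipschitz clock, and in this clock the curve is driven
by the control `u / r`, which is again admissible because the system is linear in the control. So
the endpoint is reached in time `∫₀ᵀ r`. Truncating `max |u₁| |u₂|` to `[1/2, 1]` gives such an
`r ≤ 1`, and `r < 1` on a set of positive measure, so that `∫₀ᵀ r < T`.
-/

open Filter intervalIntegral
open scoped NNReal

section ExpandingFunctions

variable {f : ℝ → ℝ} {c : ℝ≥0}

theorem strictMono_of_mul_sub_le (hc : 0 < c)
    (hf : ∀ ⦃a b⦄, a ≤ b → c * (b - a) ≤ f b - f a) : StrictMono f := by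
  intro a b hab
  have hpos : 0 < c * (b - a) := mul_pos (mod_cast hc) (sub_pos.2 hab)
  exact sub_pos.1 (hpos.trans_le (hf hab.le))

theorem antilipschitzWith_of_mul_sub_le (hc : 0 < c)
    (hf : ∀ ⦃a b⦄, a ≤ b → c * (b - a) ≤ f b - f a) : AntilipschitzWith c⁻¹ f := by
  refine .of_le_mul_dist fun a b => ?_
  rw [NNReal.coe_inv, le_inv_mul_iff₀ (mod_cast hc)]
  wlog hab : a ≤ b generalizing a b
  · simpa only [dist_comm] using this b a (le_of_not_ge hab)
  rw [dist_comm a, dist_comm (f a), Real.dist_eq, Real.dist_eq, abs_of_nonneg (sub_nonneg.2 hab)]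
  exact (hf hab).trans (le_abs_self _)

theorem surjective_of_mul_sub_le (hcont : Continuous f) (hc : 0 < c)
    (hf : ∀ ⦃a b⦄, a ≤ b → c * (b - a) ≤ f b - f a) : Function.Surjective f := by
  have hc' : (0 : ℝ) < c := mod_cast hc
  refine hcont.surjective ?_ ?_
  · refine tendsto_atTop_mono' atTop ?_
      (tendsto_atTop_add_const_left atTop (f 0) (tendsto_id.const_mul_atTop hc'))
    filter_upwards [eventually_ge_atTop 0] with t ht
    have := hf ht
    simp only [id_eq]
    linarith
  · refine tendsto_atBot_mono' atBot ?_
      (tendsto_atBot_add_const_left atBot (f 0) (tendsto_id.const_mul_atBot hc'))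
    filter_upwards [eventually_le_atBot 0] with t ht
    have := hf ht
    simp only [id_eq]
    linarith

end ExpandingFunctions

theorem quasiMeasurePreserving_hausdorffMeasure_of_antilipschitzWith {X Y : Type*}
    [EMetricSpace X] [MeasurableSpace X] [BorelSpace X]
    [EMetricSpace Y] [MeasurableSpace Y] [BorelSpace Y] {K : ℝ≥0} {g : X → Y} {d : ℝ}
    (hg : AntilipschitzWith K g) (hm : Measurable g) (hd : 0 ≤ d) :
    Measure.QuasiMeasurePreserving g (Measure.hausdorffMeasure d) (Measure.hausdorffMeasure d) := by
  refine ⟨hm, .mk fun s hs hs0 => ?_⟩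
  rw [Measure.map_apply hm hs, ← nonpos_iff_eq_zero]
  simpa [hs0] using hg.hausdorffMeasure_preimage_le hd s

theorem locallyIntegrable_of_ae_mem_Icc {X : Type*} [TopologicalSpace X] [MeasurableSpace X]
    {μ : Measure X} [IsLocallyFiniteMeasure μ] {r : X → ℝ} {c C : ℝ}
    (hr : AEStronglyMeasurable r μ) (hcr : ∀ᵐ t ∂μ, c ≤ r t) (hrC : ∀ᵐ t ∂μ, r t ≤ C) :
    LocallyIntegrable r μ :=
  (memLp_top_of_bound hr (max |c| |C|) (by
    filter_upwards [hcr, hrC] with t hct htC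
    exact abs_le_max_abs_abs hct htC)).locallyIntegrable le_top

section IndefiniteIntegral

variable {E : Type*} [NormedAddCommGroup E]

theorem intervalIntegrable_of_locallyIntegrable {f : ℝ → E} {μ : Measure ℝ}
    (hf : LocallyIntegrable f μ) (a b : ℝ) : IntervalIntegrable f μ a b :=
  (hf.integrableOn_isCompact isCompact_uIcc).intervalIntegrable

theorem lipschitzWith_integral_of_norm_le [NormedSpace ℝ E] {f : ℝ → E}
    (hf : LocallyIntegrable f) {C : ℝ≥0} (hC : ∀ᵐ t, ‖f t‖ ≤ C) (a : ℝ) :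
    LipschitzWith C fun t => ∫ s in a..t, f s := by
  have hint := intervalIntegrable_of_locallyIntegrable hf
  refine .of_dist_le_mul fun s t => ?_
  rw [dist_eq_norm, integral_interval_sub_left (hint a s) (hint a t), Real.dist_eq]
  exact norm_integral_le_of_norm_le_const_ae (hC.mono fun _ h _ => h)

theorem mul_sub_le_integral_sub_integral {r : ℝ → ℝ} {c : ℝ} (hr : LocallyIntegrable r)
    (hc : ∀ᵐ t, c ≤ r t) (a : ℝ) ⦃s t : ℝ⦄ (hst : s ≤ t) :
    c * (t - s) ≤ (∫ τ in a..t, r τ) - ∫ τ in a..s, r τ := by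
  have hint := intervalIntegrable_of_locallyIntegrable hr
  calc c * (t - s) = ∫ _ in s..t, c := by simp [mul_comm]
    _ ≤ ∫ τ in s..t, r τ := integral_mono_ae hst intervalIntegrable_const (hint s t) hc
    _ = (∫ τ in a..t, r τ) - ∫ τ in a..s, r τ :=
      (integral_interval_sub_left (hint a t) (hint a s)).symm

theorem integral_lt_mul_sub_of_measure_lt_pos {f : ℝ → ℝ} {a b C : ℝ} (hab : a ≤ b)
    (hf : IntervalIntegrable f volume a b) (hle : ∀ᵐ t ∂volume.restrict (Icc a b), f t ≤ C)
    (hlt : 0 < volume {t ∈ Icc a b | f t < C}) :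
    ∫ t in a..b, f t < C * (b - a) := by
  have hpos : volume.restrict (Ioc a b) {t | f t < C} ≠ 0 := by
    rwa [Measure.restrict_congr_set Ioc_ae_eq_Icc, Measure.restrict_apply' measurableSet_Icc,
      inter_comm, ← pos_iff_ne_zero]
  calc ∫ t in a..b, f t < ∫ _ in a..b, C :=
        integral_lt_integral_of_ae_le_of_measure_setOfPred_lt_ne_zero hab hf
          intervalIntegrable_const (ae_restrict_of_ae_restrict_of_subset Ioc_subset_Icc_self hle)
          hpos
    _ = C * (b - a) := by simp [mul_comm]

end IndefiniteIntegral

section Clock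

variable {r : ℝ → ℝ} {c C : ℝ≥0} (hr : LocallyIntegrable r) (hc : 0 < c) (hcr : ∀ᵐ t, c ≤ r t)

/-- The clock `σ t = ∫₀ᵗ r` of rate `r`, as an order isomorphism of the time axis; the lower bound
`c` on the rate makes it invertible. The inverse clock `σ.symm` reparametrizes trajectories. -/
noncomputable def clock : ℝ ≃o ℝ :=
  StrictMono.orderIsoOfSurjective (fun t => ∫ s in (0 : ℝ)..t, r s)
    (strictMono_of_mul_sub_le hc (mul_sub_le_integral_sub_integral hr hcr 0))
    (surjective_of_mul_sub_le (continuous_primitive (intervalIntegrable_of_locallyIntegrable hr) 0)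
      hc (mul_sub_le_integral_sub_integral hr hcr 0))

theorem clock_apply (t : ℝ) : clock hr hc hcr t = ∫ s in (0 : ℝ)..t, r s := rfl

theorem clock_zero : clock hr hc hcr 0 = 0 := integral_same

theorem lipschitzWith_clock_symm : LipschitzWith c⁻¹ (clock hr hc hcr).symm :=
  (antilipschitzWith_of_mul_sub_le hc
    (mul_sub_le_integral_sub_integral hr hcr 0)).to_rightInverse (clock hr hc hcr).apply_symm_apply

theorem quasiMeasurePreserving_clock_symm (hrC : ∀ᵐ t, r t ≤ C) :
    Measure.QuasiMeasurePreserving (clock hr hc hcr).symm := by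
  have hnorm : ∀ᵐ t, ‖r t‖ ≤ C := by
    filter_upwards [hcr, hrC] with t hct htC
    rwa [Real.norm_of_nonneg (c.coe_nonneg.trans hct)]
  have hanti : AntilipschitzWith C (clock hr hc hcr).symm :=
    (lipschitzWith_integral_of_norm_le hr hnorm 0).to_rightInverse
      (clock hr hc hcr).apply_symm_apply
  simpa only [hausdorffMeasure_real] using
    quasiMeasurePreserving_hausdorffMeasure_of_antilipschitzWith hanti
      (clock hr hc hcr).symm.continuous.measurable zero_le_one

theorem ae_hasDerivAt_clock_symm (hrC : ∀ᵐ t, r t ≤ C) :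
    ∀ᵐ s, HasDerivAt (clock hr hc hcr).symm (r ((clock hr hc hcr).symm s))⁻¹ s := by
  have hpull := quasiMeasurePreserving_clock_symm hr hc hcr hrC
  filter_upwards [hpull.ae hcr, hpull.ae (LocallyIntegrable.ae_hasDerivAt_integral hr)]
    with s hcs hderiv
  exact .of_local_left_inverse (clock hr hc hcr).symm.continuous.continuousAt (hderiv 0)
    ((NNReal.coe_pos.2 hc).trans_le hcs).ne'
    (.of_forall (clock hr hc hcr).apply_symm_apply)

end Clock

section Reparametrization

variable {x y z v w u1 u2 ρ τ : ℝ → ℝ}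

theorem CartanOde.comp {s : ℝ} (h : CartanOde x y z v w u1 u2 (τ s))
    (hτ : HasDerivAt τ (ρ s) s) :
    CartanOde (x ∘ τ) (y ∘ τ) (z ∘ τ) (v ∘ τ) (w ∘ τ)
      (fun s => u1 (τ s) * ρ s) (fun s => u2 (τ s) * ρ s) s := by
  obtain ⟨hx, hy, hz, hv, hw⟩ := h
  refine ⟨hx.comp s hτ, hy.comp s hτ, (hz.comp s hτ).congr_deriv ?_,
    (hv.comp s hτ).congr_deriv ?_, (hw.comp s hτ).congr_deriv ?_⟩ <;>
  · simp only [Function.comp_apply]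
    ring

theorem IsAdmissible.comp {T T' : ℝ} {L : ℝ≥0} (h : IsAdmissible T x y z v w u1 u2)
    (hlip : LipschitzOnWith L τ (Icc 0 T')) (hmaps : MapsTo τ (Icc 0 T') (Icc 0 T))
    (hτ : Measure.QuasiMeasurePreserving τ) (hρ : Measurable ρ)
    (hderiv : ∀ᵐ s ∂volume.restrict (Icc 0 T'), HasDerivAt τ (ρ s) s)
    (hbound : ∀ᵐ s ∂volume.restrict (Icc 0 T'), max |u1 (τ s) * ρ s| |u2 (τ s) * ρ s| ≤ 1) :
    IsAdmissible T' (x ∘ τ) (y ∘ τ) (z ∘ τ) (v ∘ τ) (w ∘ τ)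
      (fun s => u1 (τ s) * ρ s) (fun s => u2 (τ s) * ρ s) := by
  obtain ⟨⟨K, hK⟩, hu1, hu2, hode⟩ := h
  refine ⟨⟨K * L, hK.comp hlip hmaps⟩, (hu1.comp hτ.measurable).mul hρ,
    (hu2.comp hτ.measurable).mul hρ, ?_⟩
  filter_upwards [(hτ.restrict hmaps).ae hode, hderiv, hbound] with s hs hds hbs
  exact ⟨hbs, hs.2.comp hds⟩

theorem max_abs_mul_inv_le_one {a b m : ℝ} (hm : 0 < m) (h : max |a| |b| ≤ m) :
    max |a * m⁻¹| |b * m⁻¹| ≤ 1 := by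
  rwa [abs_mul, abs_mul, abs_of_pos (inv_pos.2 hm), ← max_mul_of_nonneg _ _ (inv_nonneg.2 hm.le),
    ← div_eq_mul_inv, div_le_one hm]

theorem reach_integral_of_max_abs_le {r : ℝ → ℝ} {T : ℝ} {c C : ℝ≥0} {q1 : ℝ × ℝ × ℝ × ℝ × ℝ}
    (hT : 0 ≤ T) (htraj : IsAdmissible T x y z v w u1 u2)
    (hstart : (x 0, y 0, z 0, v 0, w 0) = (0, 0, 0, 0, 0))
    (hend : (x T, y T, z T, v T, w T) = q1)
    (hr : Measurable r) (hc : 0 < c) (hcr : ∀ᵐ t, c ≤ r t) (hrC : ∀ᵐ t, r t ≤ C)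
    (hu : ∀ᵐ t ∂volume.restrict (Icc 0 T), max |u1 t| |u2 t| ≤ r t) :
    Reach q1 (∫ t in (0 : ℝ)..T, r t) := by
  have hloc := locallyIntegrable_of_ae_mem_Icc hr.aestronglyMeasurable hcr hrC
  rw [← clock_apply hloc hc hcr T]
  set σ := clock hloc hc hcr
  have hσ0 : σ.symm 0 = 0 := by rw [OrderIso.symm_apply_eq, clock_zero]
  have hmaps : MapsTo σ.symm (Icc 0 (σ T)) (Icc 0 T) := by
    simpa only [hσ0, σ.symm_apply_apply] using σ.symm.monotone.mapsTo_Icc (a := 0) (b := σ T)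
  have hnull := quasiMeasurePreserving_clock_symm hloc hc hcr hrC
  have hbound : ∀ᵐ s ∂volume.restrict (Icc 0 (σ T)),
      max |u1 (σ.symm s) * (r (σ.symm s))⁻¹| |u2 (σ.symm s) * (r (σ.symm s))⁻¹| ≤ 1 := by
    filter_upwards [(hnull.restrict hmaps).ae hu, ae_restrict_of_ae (hnull.ae hcr)] with s hus hcs
    exact max_abs_mul_inv_le_one ((NNReal.coe_pos.2 hc).trans_le hcs) hus
  have hadm := htraj.comp (τ := σ.symm)
    (lipschitzWith_clock_symm hloc hc hcr).lipschitzOnWith hmaps hnull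
    (hr.comp hnull.measurable).inv
    (ae_restrict_of_ae (ae_hasDerivAt_clock_symm hloc hc hcr hrC)) hbound
  refine ⟨?_, _, _, _, _, _, _, _, hadm, ?_, ?_⟩
  · exact (clock_zero hloc hc hcr).ge.trans (σ.monotone hT)
  · simpa only [Function.comp_apply, hσ0] using hstart
  · simpa only [Function.comp_apply, σ.symm_apply_apply] using hend

end Reparametrization

/-- The size `max |u1| |u2|` of a control, truncated to `[1/2, 1]`: the rate of a clock in which the
rescaled control is still admissible. Any lower cut-off in `(0, 1)` would do. -/
noncomputable def truncatedSpeed (u1 u2 : ℝ → ℝ) (t : ℝ) : ℝ :=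
  min 1 (max (max |u1 t| |u2 t|) (1 / 2))

section TruncatedSpeed

variable (u1 u2 : ℝ → ℝ) (t : ℝ)

theorem truncatedSpeed_le_one : truncatedSpeed u1 u2 t ≤ 1 := min_le_left _ _

theorem half_le_truncatedSpeed : 1 / 2 ≤ truncatedSpeed u1 u2 t :=
  le_min (by norm_num) (le_max_right _ _)

variable {u1 u2 t}

theorem measurable_truncatedSpeed (h1 : Measurable u1) (h2 : Measurable u2) :
    Measurable (truncatedSpeed u1 u2) :=
  measurable_const.min ((h1.abs.max h2.abs).max measurable_const)

theorem max_abs_le_truncatedSpeed (h : max |u1 t| |u2 t| ≤ 1) :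
    max |u1 t| |u2 t| ≤ truncatedSpeed u1 u2 t :=
  le_min h (le_max_left _ _)

theorem truncatedSpeed_lt_one (h : max |u1 t| |u2 t| < 1) : truncatedSpeed u1 u2 t < 1 :=
  min_lt_of_right_lt (max_lt h (by norm_num))

end TruncatedSpeed

/-- If the control of an admissible trajectory satisfies `max (|u1|,|u2|) < 1` on a
set of positive measure, the trajectory is not time-optimal: its endpoint can be
reached in a strictly smaller time. -/
theorem nonmaximal_control_not_optimal
    (T : ℝ) (hT : 0 ≤ T) (x y z v w u1 u2 : ℝ → ℝ) (q1 : ℝ × ℝ × ℝ × ℝ × ℝ)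
    (htraj : IsAdmissible T x y z v w u1 u2)
    (hstart : (x 0, y 0, z 0, v 0, w 0) = (0, 0, 0, 0, 0))
    (hend : (x T, y T, z T, v T, w T) = q1)
    (hsmall : 0 < volume {t ∈ Icc (0:ℝ) T | max |u1 t| |u2 t| < 1}) :
    ∃ T' : ℝ, T' < T ∧ Reach q1 T' := by
  have hmeas := measurable_truncatedSpeed htraj.2.1 htraj.2.2.1
  have hlow : ∀ᵐ t, ((1 / 2 : ℝ≥0) : ℝ) ≤ truncatedSpeed u1 u2 t :=
    .of_forall fun t => by simpa using half_le_truncatedSpeed u1 u2 t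
  have hup : ∀ᵐ t, truncatedSpeed u1 u2 t ≤ (1 : ℝ≥0) := .of_forall (truncatedSpeed_le_one u1 u2)
  refine ⟨∫ t in (0 : ℝ)..T, truncatedSpeed u1 u2 t, ?_,
    reach_integral_of_max_abs_le hT htraj hstart hend hmeas (by norm_num) hlow hup
      (htraj.2.2.2.mono fun _ h => max_abs_le_truncatedSpeed h.1)⟩
  have hslow : 0 < volume {t ∈ Icc 0 T | truncatedSpeed u1 u2 t < 1} :=
    hsmall.trans_le (measure_mono fun _ ht => ⟨ht.1, truncatedSpeed_lt_one ht.2⟩)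
  have hint := intervalIntegrable_of_locallyIntegrable
    (locallyIntegrable_of_ae_mem_Icc hmeas.aestronglyMeasurable hlow hup) 0 T
  simpa using integral_lt_mul_sub_of_measure_lt_pos hT hint (ae_restrict_of_ae hup) hslow
end

section
/- Let h : [0,T] → ℝ⁵ be Lipschitz and u = (u1,u2) measurable with max(|u1|,|u2|) ≤ 1 a.e., satisfying the vertical subsystem and the maximality condition u1·h1 + u2·h2 = |h1| + |h2| a.e., and suppose |h1(t)| + |h2(t)| > 0 for all t (normal case). If h1(t) = 0 for all t in an open interval I ⊆ [0,T] (h1-singular arc), then on I: h3 ≡ 0; h2 is a nonzero constant; u2(t) = s2 := sgn(h2) for a.e. t ∈ I; and exactly one of the following holds: (a) h4 = h5 = 0 on I (and u1 is only restricted by |u1| ≤ 1), or (b) h4 ≠ 0 on I, |h5/h4| ≤ 1, and u1(t) = −s2·h5/h4 for a.e. t ∈ I. -/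
open MeasureTheory Set

/-- The vertical subsystem of the Pontryagin maximum principle for the Cartan
control system. -/
def VertOde (h1 h2 h3 h4 h5 u1 u2 : ℝ → ℝ) (t : ℝ) : Prop :=
  HasDerivAt h1 (-(u2 t) * h3 t) t ∧ HasDerivAt h2 (u1 t * h3 t) t ∧
  HasDerivAt h3 (u1 t * h4 t + u2 t * h5 t) t ∧
  HasDerivAt h4 0 t ∧ HasDerivAt h5 0 t

/-- A Lipschitz solution of the vertical subsystem on `[0,T]` with measurable control. -/
def IsVertSol (T : ℝ) (h1 h2 h3 h4 h5 u1 u2 : ℝ → ℝ) : Prop :=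
  (∃ K, LipschitzOnWith K (fun t => (h1 t, h2 t, h3 t, h4 t, h5 t)) (Icc 0 T)) ∧
  Measurable u1 ∧ Measurable u2 ∧
  (∀ᵐ t ∂(volume.restrict (Icc 0 T)), VertOde h1 h2 h3 h4 h5 u1 u2 t)

/-!
On an open set where `h1 = 0`, maximality reads `u2 h2 = |h2|`, and `h2 ≠ 0` by normality, so
`u2 = sgn h2 = ±1` almost everywhere. The equations then cascade: differentiating `h1 = 0` gives
`u2 h3 = 0`, hence `h3 = 0` almost everywhere and, by continuity, everywhere; so `h2' = 0` almost
everywhere and `h2`, being absolutely continuous, is constant, as are `h4` and `h5`. Finally,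
differentiating `h3 = 0` gives `u1 h4 + u2 h5 = 0`, which determines `u1` unless `h4 = 0`, in which
case `h5 = 0` as well.
-/

section LocallyAbsolutelyContinuous

variable {X Y : Type*} [PseudoMetricSpace X] [PseudoMetricSpace Y] {s : Set ℝ}

/-- Local absolute continuity on `s`: absolute continuity on each compact interval contained in
`s`. It is the regularity of Carathéodory solutions of an ordinary differential equation. -/
def LocallyAbsolutelyContinuousOn (f : ℝ → X) (s : Set ℝ) : Prop :=
  ∀ ⦃x y : ℝ⦄, uIcc x y ⊆ s → AbsolutelyContinuousOnInterval f x y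

namespace LocallyAbsolutelyContinuousOn

theorem of_lipschitzOnWith {K : NNReal} {f : ℝ → X} (hf : LipschitzOnWith K f s) :
    LocallyAbsolutelyContinuousOn f s :=
  fun _ _ hxy => (hf.mono hxy).absolutelyContinuousOnInterval

theorem comp_lipschitzWith {K : NNReal} {f : ℝ → X} {g : X → Y}
    (hf : LocallyAbsolutelyContinuousOn f s) (hg : LipschitzWith K g) :
    LocallyAbsolutelyContinuousOn (fun t => g (f t)) s := by
  intro x y hxy
  refine squeeze_zero (fun _ => Finset.sum_nonneg fun _ _ => dist_nonneg) (fun E => ?_)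
    (by simpa using Filter.Tendsto.const_mul (K : ℝ) (hf hxy))
  rw [Finset.mul_sum]
  exact Finset.sum_le_sum fun _ _ => hg.dist_le_mul _ _

theorem fst {f : ℝ → X × Y} (hf : LocallyAbsolutelyContinuousOn f s) :
    LocallyAbsolutelyContinuousOn (fun t => (f t).1) s :=
  hf.comp_lipschitzWith LipschitzWith.prod_fst

theorem snd {f : ℝ → X × Y} (hf : LocallyAbsolutelyContinuousOn f s) :
    LocallyAbsolutelyContinuousOn (fun t => (f t).2) s :=
  hf.comp_lipschitzWith LipschitzWith.prod_snd

theorem continuousOn {F : Type*} [SeminormedAddCommGroup F] {f : ℝ → F}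
    (hf : LocallyAbsolutelyContinuousOn f s) (hs : IsOpen s) : ContinuousOn f s := by
  intro t ht
  obtain ⟨ε, hε, hsub⟩ := (nhds_basis_Icc_pos t).mem_iff.1 (hs.mem_nhds ht)
  have hIcc : uIcc (t - ε) (t + ε) = Icc (t - ε) (t + ε) := uIcc_of_le (by linarith)
  have hcont : ContinuousOn f (Icc (t - ε) (t + ε)) :=
    hIcc ▸ (hf (hIcc.trans_subset hsub)).continuousOn
  exact (hcont.continuousAt (Icc_mem_nhds (by linarith) (by linarith))).continuousWithinAt

theorem exists_eq_const_of_ae_hasDerivAt_zero {F : Type*} [NormedAddCommGroup F] [NormedSpace ℝ F]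
    {f : ℝ → F} (hf : LocallyAbsolutelyContinuousOn f s) (hs : s.OrdConnected)
    (hderiv : ∀ᵐ t ∂(volume.restrict s), HasDerivAt f 0 t) : ∃ c, ∀ t ∈ s, f t = c := by
  rcases s.eq_empty_or_nonempty with rfl | ⟨x, hx⟩
  · exact ⟨0, fun t ht => ht.elim⟩
  refine ⟨f x, fun t ht => ?_⟩
  have hsub : uIcc t x ⊆ s := hs.uIcc_subset ht hx
  obtain ⟨c, hc⟩ := (hf hsub).const_of_ae_hasDerivAt_zero
    ((ae_imp_of_ae_restrict hderiv).mono fun _ h hmem => h (hsub hmem))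
  rw [hc t left_mem_uIcc, hc x right_mem_uIcc]

end LocallyAbsolutelyContinuousOn

end LocallyAbsolutelyContinuous

theorem hasDerivAt_eq_zero_of_forall_mem_eq {𝕜 F : Type*} [NontriviallyNormedField 𝕜]
    [NormedAddCommGroup F] [NormedSpace 𝕜 F] {f : 𝕜 → F} {c f' : F} {s : Set 𝕜} {t : 𝕜}
    (hs : IsOpen s) (ht : t ∈ s) (hc : ∀ x ∈ s, f x = c) (hf : HasDerivAt f f' t) : f' = 0 :=
  hf.unique ((hasDerivAt_const t c).congr_of_eventuallyEq
    (Filter.eventually_of_mem (hs.mem_nhds ht) hc))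

theorem abs_real_sign_of_ne_zero {x : ℝ} (hx : x ≠ 0) : |Real.sign x| = 1 := by
  rcases Real.sign_apply_eq_of_ne_zero x hx with h | h <;> simp [h]

theorem eq_real_sign_of_mul_eq_abs {u x : ℝ} (hx : x ≠ 0) (h : u * x = |x|) :
    u = Real.sign x := by
  refine mul_right_cancel₀ hx (h.trans ?_)
  rcases hx.lt_or_gt with hneg | hpos
  · rw [Real.sign_of_neg hneg, abs_of_neg hneg, neg_one_mul]
  · rw [Real.sign_of_pos hpos, abs_of_pos hpos, one_mul]

section LinearRelation

variable {u p q σ : ℝ}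

theorem eq_neg_mul_div_of_mul_add_mul_eq_zero (hp : p ≠ 0) (h : u * p + σ * q = 0) :
    u = -σ * (q / p) := by
  field_simp
  linarith

theorem abs_div_le_one_of_mul_add_mul_eq_zero (hp : p ≠ 0) (hσ : |σ| = 1) (hu : |u| ≤ 1)
    (h : u * p + σ * q = 0) : |q / p| ≤ 1 :=
  calc |q / p| = |-σ * (q / p)| := by rw [abs_mul, abs_neg, hσ, one_mul]
    _ = |u| := by rw [eq_neg_mul_div_of_mul_add_mul_eq_zero hp h]
    _ ≤ 1 := hu

theorem eq_zero_or_eventually_eq_neg_mul_div {α : Type*} {l : Filter α} [l.NeBot] {u : α → ℝ}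
    (hσ : |σ| = 1) (hu : ∀ᶠ t in l, |u t| ≤ 1) (h : ∀ᶠ t in l, u t * p + σ * q = 0) :
    (p = 0 ∧ q = 0) ∨ ((p ≠ 0 ∧ |q / p| ≤ 1) ∧ ∀ᶠ t in l, u t = -σ * (q / p)) := by
  obtain ⟨t, hut, ht⟩ := (hu.and h).exists
  rcases eq_or_ne p 0 with rfl | hp
  · have hσ_ne : σ ≠ 0 := by
      rintro rfl
      simp at hσ
    exact .inl ⟨rfl, by simpa [hσ_ne] using ht⟩
  · exact .inr ⟨⟨hp, abs_div_le_one_of_mul_add_mul_eq_zero hp hσ hut ht⟩,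
      h.mono fun _ => eq_neg_mul_div_of_mul_add_mul_eq_zero hp⟩

end LinearRelation

section SingularArc

variable {h1 h2 h3 h4 h5 u1 u2 : ℝ → ℝ} {s : Set ℝ}

theorem ae_u2_eq_sign_h2 (hs : MeasurableSet s)
    (hmax : ∀ᵐ t ∂(volume.restrict s), u1 t * h1 t + u2 t * h2 t = |h1 t| + |h2 t|)
    (hsing : ∀ t ∈ s, h1 t = 0) (hne : ∀ t ∈ s, h2 t ≠ 0) :
    ∀ᵐ t ∂(volume.restrict s), u2 t = Real.sign (h2 t) := by
  filter_upwards [hmax, ae_restrict_mem hs] with t hmax_t ht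
  exact eq_real_sign_of_mul_eq_abs (hne t ht) (by simpa [hsing t ht] using hmax_t)

theorem h3_eq_zero_of_h1_eq_zero (hs : IsOpen s) (hcont : ContinuousOn h3 s)
    (hode : ∀ᵐ t ∂(volume.restrict s), VertOde h1 h2 h3 h4 h5 u1 u2 t)
    (hsing : ∀ t ∈ s, h1 t = 0) (hu2 : ∀ᵐ t ∂(volume.restrict s), u2 t ≠ 0) :
    ∀ t ∈ s, h3 t = 0 := by
  refine Measure.eqOn_open_of_ae_eq (μ := volume) ?_ hs hcont continuousOn_const
  filter_upwards [hode, hu2, ae_restrict_mem hs.measurableSet] with t ⟨hderiv, _⟩ hu2_t ht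
  simpa [hu2_t] using hasDerivAt_eq_zero_of_forall_mem_eq hs ht hsing hderiv

theorem ae_u1_mul_h4_add_u2_mul_h5_eq_zero (hs : IsOpen s)
    (hode : ∀ᵐ t ∂(volume.restrict s), VertOde h1 h2 h3 h4 h5 u1 u2 t)
    (h3_zero : ∀ t ∈ s, h3 t = 0) :
    ∀ᵐ t ∂(volume.restrict s), u1 t * h4 t + u2 t * h5 t = 0 := by
  filter_upwards [hode, ae_restrict_mem hs.measurableSet] with t ⟨_, _, hderiv, _⟩ ht
  exact hasDerivAt_eq_zero_of_forall_mem_eq hs ht h3_zero hderiv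

theorem exists_h2_h4_h5_eq_const (hs : MeasurableSet s) (hconn : s.OrdConnected)
    (hac : LocallyAbsolutelyContinuousOn (fun t => (h1 t, h2 t, h3 t, h4 t, h5 t)) s)
    (hode : ∀ᵐ t ∂(volume.restrict s), VertOde h1 h2 h3 h4 h5 u1 u2 t)
    (h3_zero : ∀ t ∈ s, h3 t = 0) :
    ∃ c2 c4 c5, ∀ t ∈ s, h2 t = c2 ∧ h4 t = c4 ∧ h5 t = c5 := by
  obtain ⟨c2, hc2⟩ := hac.snd.fst.exists_eq_const_of_ae_hasDerivAt_zero hconn (by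
    filter_upwards [hode, ae_restrict_mem hs] with t ⟨_, hderiv, _⟩ ht
    simpa [h3_zero t ht] using hderiv)
  obtain ⟨c4, hc4⟩ := hac.snd.snd.snd.fst.exists_eq_const_of_ae_hasDerivAt_zero hconn
    (hode.mono fun _ ⟨_, _, _, hderiv, _⟩ => hderiv)
  obtain ⟨c5, hc5⟩ := hac.snd.snd.snd.snd.exists_eq_const_of_ae_hasDerivAt_zero hconn
    (hode.mono fun _ ⟨_, _, _, _, hderiv⟩ => hderiv)
  exact ⟨c2, c4, c5, fun t ht => ⟨hc2 t ht, hc4 t ht, hc5 t ht⟩⟩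

theorem h4_h5_eq_zero_or_ae_u1_eq (hs : IsOpen s) (hnonempty : s.Nonempty)
    (hbound : ∀ᵐ t ∂(volume.restrict s), |u1 t| ≤ 1) (hne : ∀ t ∈ s, h2 t ≠ 0)
    (hconst : ∃ c2 c4 c5, ∀ t ∈ s, h2 t = c2 ∧ h4 t = c4 ∧ h5 t = c5)
    (hrel : ∀ᵐ t ∂(volume.restrict s), u1 t * h4 t + Real.sign (h2 t) * h5 t = 0) :
    (∀ t ∈ s, h4 t = 0 ∧ h5 t = 0) ∨
      ((∀ t ∈ s, h4 t ≠ 0 ∧ |h5 t / h4 t| ≤ 1) ∧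
        (∀ᵐ t ∂(volume.restrict s), u1 t = -(Real.sign (h2 t)) * (h5 t / h4 t))) := by
  obtain ⟨c2, c4, c5, hconst⟩ := hconst
  have hmem : ∀ᵐ t ∂(volume.restrict s), t ∈ s := ae_restrict_mem hs.measurableSet
  have : (ae (volume.restrict s)).NeBot :=
    ae_restrict_neBot.2 (hs.measure_ne_zero volume hnonempty)
  have hc2 : c2 ≠ 0 := hnonempty.elim fun t ht => (hconst t ht).1 ▸ hne t ht
  have hrel_const : ∀ᵐ t ∂(volume.restrict s), u1 t * c4 + Real.sign c2 * c5 = 0 := by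
    filter_upwards [hrel, hmem] with t hrel_t ht
    obtain ⟨e2, e4, e5⟩ := hconst t ht
    rwa [e2, e4, e5] at hrel_t
  refine (eq_zero_or_eventually_eq_neg_mul_div (abs_real_sign_of_ne_zero hc2) hbound
    hrel_const).imp (fun hzero t ht => ?_) (And.imp (fun hdiv t ht => ?_) fun hu1 => ?_)
  · rwa [(hconst t ht).2.1, (hconst t ht).2.2]
  · rwa [(hconst t ht).2.1, (hconst t ht).2.2]
  · filter_upwards [hu1, hmem] with t hu1_t ht
    rwa [(hconst t ht).1, (hconst t ht).2.1, (hconst t ht).2.2]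

theorem h1_singular_arc_structure_general (hs : IsOpen s) (hconn : s.OrdConnected)
    (hnonempty : s.Nonempty)
    (hac : LocallyAbsolutelyContinuousOn (fun t => (h1 t, h2 t, h3 t, h4 t, h5 t)) s)
    (hode : ∀ᵐ t ∂(volume.restrict s), VertOde h1 h2 h3 h4 h5 u1 u2 t)
    (hbound : ∀ᵐ t ∂(volume.restrict s), |u1 t| ≤ 1)
    (hmax : ∀ᵐ t ∂(volume.restrict s), u1 t * h1 t + u2 t * h2 t = |h1 t| + |h2 t|)
    (hnormal : ∀ t ∈ s, 0 < |h1 t| + |h2 t|)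
    (hsing : ∀ t ∈ s, h1 t = 0) :
    (∀ t ∈ s, h3 t = 0) ∧
    (∃ c : ℝ, c ≠ 0 ∧ ∀ t ∈ s, h2 t = c) ∧
    (∀ᵐ t ∂(volume.restrict s), u2 t = Real.sign (h2 t)) ∧
    ((∀ t ∈ s, h4 t = 0 ∧ h5 t = 0) ∨
      ((∀ t ∈ s, h4 t ≠ 0 ∧ |h5 t / h4 t| ≤ 1) ∧
        (∀ᵐ t ∂(volume.restrict s), u1 t = -(Real.sign (h2 t)) * (h5 t / h4 t)))) := by
  have h2_ne : ∀ t ∈ s, h2 t ≠ 0 := fun t ht => by simpa [hsing t ht] using hnormal t ht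
  have hu2 := ae_u2_eq_sign_h2 hs.measurableSet hmax hsing h2_ne
  have hu2_ne : ∀ᵐ t ∂(volume.restrict s), u2 t ≠ 0 := by
    filter_upwards [hu2, ae_restrict_mem hs.measurableSet] with t hu2_t ht
    simpa [hu2_t] using h2_ne t ht
  have h3_cont : ContinuousOn h3 s := hac.snd.snd.fst.continuousOn hs
  have h3_zero := h3_eq_zero_of_h1_eq_zero hs h3_cont hode hsing hu2_ne
  have hconst := exists_h2_h4_h5_eq_const hs.measurableSet hconn hac hode h3_zero
  have hrel : ∀ᵐ t ∂(volume.restrict s), u1 t * h4 t + Real.sign (h2 t) * h5 t = 0 := by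
    filter_upwards [ae_u1_mul_h4_add_u2_mul_h5_eq_zero hs hode h3_zero, hu2] with t hrel_t hu2_t
    rwa [← hu2_t]
  refine ⟨h3_zero, ?_, hu2,
    h4_h5_eq_zero_or_ae_u1_eq hs hnonempty hbound h2_ne hconst hrel⟩
  obtain ⟨c2, _, _, hc⟩ := hconst
  exact ⟨c2, hnonempty.elim fun t ht => (hc t ht).1 ▸ h2_ne t ht, fun t ht => (hc t ht).1⟩

end SingularArc

/-- Characterization of `h1`-singular normal arcs. -/
theorem h1_singular_arc_structure
    (T a b : ℝ) (h1 h2 h3 h4 h5 u1 u2 : ℝ → ℝ)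
    (hsol : IsVertSol T h1 h2 h3 h4 h5 u1 u2)
    (hbound : ∀ᵐ t ∂(volume.restrict (Icc 0 T)), max |u1 t| |u2 t| ≤ 1)
    (hmax : ∀ᵐ t ∂(volume.restrict (Icc 0 T)),
      u1 t * h1 t + u2 t * h2 t = |h1 t| + |h2 t|)
    (hnormal : ∀ t ∈ Icc (0:ℝ) T, 0 < |h1 t| + |h2 t|)
    (hab : a < b) (hI : Ioo a b ⊆ Icc (0:ℝ) T)
    (hsing : ∀ t ∈ Ioo a b, h1 t = 0) :
    (∀ t ∈ Ioo a b, h3 t = 0) ∧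
    (∃ c : ℝ, c ≠ 0 ∧ ∀ t ∈ Ioo a b, h2 t = c) ∧
    (∀ᵐ t ∂(volume.restrict (Ioo a b)), u2 t = Real.sign (h2 t)) ∧
    ((∀ t ∈ Ioo a b, h4 t = 0 ∧ h5 t = 0) ∨
      ((∀ t ∈ Ioo a b, h4 t ≠ 0 ∧ |h5 t / h4 t| ≤ 1) ∧
        (∀ᵐ t ∂(volume.restrict (Ioo a b)),
          u1 t = -(Real.sign (h2 t)) * (h5 t / h4 t)))) := by
  obtain ⟨⟨K, hK⟩, -, -, hode⟩ := hsol
  have hle : ae (volume.restrict (Ioo a b)) ≤ ae (volume.restrict (Icc 0 T)) :=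
    ae_mono (Measure.restrict_mono_set volume hI)
  exact h1_singular_arc_structure_general isOpen_Ioo ordConnected_Ioo (nonempty_Ioo.2 hab)
    (.of_lipschitzOnWith (hK.mono hI)) (hode.filter_mono hle)
    ((hbound.filter_mono hle).mono fun _ => le_of_max_le_left) (hmax.filter_mono hle)
    (fun t ht => hnormal t (hI ht)) hsing
end

section
/- Let c4, c5 ∈ ℝ and let (f, g) : [a,b] → ℝ² be a Lipschitz curve satisfying for a.e. t: f'(t) = −g(t) and g'(t) = c4·sgn(f(t)) + c5. Then the function t ↦ g(t)²/2 + c5·f(t) + c4·|f(t)| is constant on [a,b]. -/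
open MeasureTheory Set

open AbsolutelyContinuousOnInterval Filter
open scoped NNReal Topology

/-!
Along a solution the energy `g² / 2 + c5 * f + c4 * |f|` is absolutely continuous, so it suffices
that its derivative vanishes almost everywhere. The only delicate term is `|f|` at the zeros of
`f`, and this is handled by convexity: since `sgn (f t)` is a subgradient of `|·|` at `f t`, the
function `r ↦ |f r| - sgn (f t) * f r` is minimal at `t`, so wherever `|f|` is differentiable the
chain rule `|f|' = sgn f * f'` holds, also where `|·|` itself is not differentiable.
-/

/-- `p` is a subgradient of `φ` at `x`: the line of slope `p` through `(x, φ x)` supports the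
graph of `φ` from below. It stands in for the derivative of the potential at its corners. -/
def IsSubgradientAt (φ : ℝ → ℝ) (p x : ℝ) : Prop :=
  ∀ y, φ x + p * (y - x) ≤ φ y

theorem isSubgradientAt_abs_sign (x : ℝ) : IsSubgradientAt (|·|) (Real.sign x) x := by
  intro y
  rcases lt_trichotomy x 0 with hneg | rfl | hpos
  · simp only [Real.sign_of_neg hneg, abs_of_neg hneg]
    linarith [neg_le_abs y]
  · simp
  · simp only [Real.sign_of_pos hpos, abs_of_pos hpos]
    linarith [le_abs_self y]

theorem IsSubgradientAt.hasDerivAt_comp {φ f : ℝ → ℝ} {p f' t : ℝ}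
    (hp : IsSubgradientAt φ p (f t)) (hf : HasDerivAt f f' t)
    (hφf : DifferentiableAt ℝ (φ ∘ f) t) : HasDerivAt (φ ∘ f) (p * f') t := by
  have hmin : IsLocalMin (fun r ↦ (φ ∘ f) r - p * f r) t :=
    .of_forall fun r ↦ by
      have hsupport := hp (f r)
      simp only [Function.comp_apply]
      linarith
  have hcritical : deriv (φ ∘ f) t - p * f' = 0 :=
    hmin.hasDerivAt_eq_zero (hφf.hasDerivAt.sub (hf.const_mul p))
  simpa only [sub_eq_zero.mp hcritical] using hφf.hasDerivAt

theorem absolutelyContinuousOnInterval_comp_of_lipschitzOnWith {X Y : Type*} [PseudoMetricSpace X]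
    [PseudoMetricSpace Y] {K : ℝ≥0} {φ : X → Y} {f : ℝ → X} {a b : ℝ}
    (hφ : LipschitzOnWith K φ (f '' uIcc a b)) (hf : AbsolutelyContinuousOnInterval f a b) :
    AbsolutelyContinuousOnInterval (φ ∘ f) a b := by
  have hbound : Tendsto
      (fun E : ℕ × (ℕ → ℝ × ℝ) ↦ K * ∑ i ∈ Finset.range E.1, dist (f (E.2 i).1) (f (E.2 i).2))
      (totalLengthFilter ⊓ 𝓟 (disjWithin a b)) (𝓝 0) := by
    simpa only [mul_zero] using Tendsto.const_mul (K : ℝ) hf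
  refine squeeze_zero' (.of_forall fun E ↦ Finset.sum_nonneg fun i _ ↦ dist_nonneg) ?_ hbound
  filter_upwards [mem_inf_of_right (mem_principal_self _)] with E hE
  rw [Finset.mul_sum]
  refine Finset.sum_le_sum fun i hi ↦ ?_
  obtain ⟨hleft, hright⟩ := hE.1 i hi
  exact hφ.dist_le_mul _ (mem_image_of_mem f hleft) _ (mem_image_of_mem f hright)

/-- The energy of the system `x' = -y`, `y' = c4 * p + c5` in which `p` is a subgradient of `φ`
at `x`; the reduced vertical subsystem is the case `φ = |·|`. -/
noncomputable def subgradientEnergy (φ : ℝ → ℝ) (c4 c5 x y : ℝ) : ℝ :=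
  y ^ 2 / 2 + c5 * x + c4 * φ x

theorem hasDerivAt_subgradientEnergy_zero {φ f g : ℝ → ℝ} {c4 c5 p t : ℝ}
    (hp : IsSubgradientAt φ p (f t)) (hf : HasDerivAt f (-(g t)) t)
    (hg : HasDerivAt g (c4 * p + c5) t) (hφf : DifferentiableAt ℝ (φ ∘ f) t) :
    HasDerivAt (fun r ↦ subgradientEnergy φ c4 c5 (f r) (g r)) 0 t := by
  have henergy := (((hg.pow 2).div_const 2).add (hf.const_mul c5)).add
    ((hp.hasDerivAt_comp hf hφf).const_mul c4)
  refine henergy.congr_deriv ?_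
  ring

theorem absolutelyContinuousOnInterval_subgradientEnergy {φ f g : ℝ → ℝ} {a b : ℝ} (c4 c5 : ℝ)
    (hf : AbsolutelyContinuousOnInterval f a b) (hg : AbsolutelyContinuousOnInterval g a b)
    (hφf : AbsolutelyContinuousOnInterval (φ ∘ f) a b) :
    AbsolutelyContinuousOnInterval (fun r ↦ subgradientEnergy φ c4 c5 (f r) (g r)) a b := by
  have hkinetic : AbsolutelyContinuousOnInterval (fun r ↦ g r ^ 2 / 2) a b := by
    simpa only [sq, div_eq_inv_mul] using (hg.fun_mul hg).const_mul 2⁻¹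
  exact (hkinetic.fun_add (hf.const_mul c5)).fun_add (hφf.const_mul c4)

theorem reduced_system_first_integral_general
    {a b c4 c5 : ℝ} {φ f g : ℝ → ℝ} {K : ℝ≥0} (hφ : LipschitzOnWith K φ (f '' uIcc a b))
    (hf : AbsolutelyContinuousOnInterval f a b) (hg : AbsolutelyContinuousOnInterval g a b)
    (hode : ∀ᵐ t ∂(volume.restrict (uIcc a b)), HasDerivAt f (-(g t)) t ∧
      ∃ p, IsSubgradientAt φ p (f t) ∧ HasDerivAt g (c4 * p + c5) t) :
    ∀ s ∈ uIcc a b, ∀ t ∈ uIcc a b,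
      g s ^ 2 / 2 + c5 * f s + c4 * φ (f s) = g t ^ 2 / 2 + c5 * f t + c4 * φ (f t) := by
  have hφf := absolutelyContinuousOnInterval_comp_of_lipschitzOnWith hφ hf
  have hderiv : ∀ᵐ t, t ∈ uIcc a b →
      HasDerivAt (fun r ↦ subgradientEnergy φ c4 c5 (f r) (g r)) 0 t := by
    filter_upwards [(ae_restrict_iff' measurableSet_uIcc).mp hode, hφf.ae_differentiableAt]
      with t hode_t hdiff ht
    obtain ⟨hf', p, hp, hg'⟩ := hode_t ht
    exact hasDerivAt_subgradientEnergy_zero hp hf' hg' (hdiff ht)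
  obtain ⟨C, hconst⟩ := (absolutelyContinuousOnInterval_subgradientEnergy c4 c5 hf hg hφf)
    |>.const_of_ae_hasDerivAt_zero hderiv
  exact fun s hs t ht ↦ (hconst s hs).trans (hconst t ht).symm

/-- First integral of the reduced vertical subsystem `f' = −g`, `g' = c4·sgn f + c5`:
the function `g²/2 + c5·f + c4·|f|` is constant along Lipschitz solutions. -/
theorem reduced_system_first_integral
    (a b c4 c5 : ℝ) (f g : ℝ → ℝ)
    (hlip : ∃ K, LipschitzOnWith K (fun t => (f t, g t)) (Icc a b))
    (hode : ∀ᵐ t ∂(volume.restrict (Icc a b)),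
      HasDerivAt f (-(g t)) t ∧ HasDerivAt g (c4 * Real.sign (f t) + c5) t) :
    ∀ s ∈ Icc a b, ∀ t ∈ Icc a b,
      g s ^ 2 / 2 + c5 * f s + c4 * |f s| = g t ^ 2 / 2 + c5 * f t + c4 * |f t| := by
  intro s hs t ht
  obtain ⟨K, hK⟩ := hlip
  have huIcc : Icc a b = uIcc a b := (uIcc_of_le (hs.1.trans hs.2)).symm
  rw [huIcc] at hK hode hs ht
  have hf : LipschitzOnWith _ f (uIcc a b) := LipschitzWith.prod_fst.comp_lipschitzOnWith hK
  have hg : LipschitzOnWith _ g (uIcc a b) := LipschitzWith.prod_snd.comp_lipschitzOnWith hK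
  exact reduced_system_first_integral_general lipschitzWith_one_norm.lipschitzOnWith
    hf.absolutelyContinuousOnInterval hg.absolutelyContinuousOnInterval
    (hode.mono fun r ⟨hf', hg'⟩ ↦ ⟨hf', _, isSubgradientAt_abs_sign (f r), hg'⟩) s hs t ht
end

section
/- Let x : [0,1] → ℝ be a Lipschitz function with x(0) = 0 and |x'(t)| ≤ 1 for a.e. t, and set x1 = x(1) and z1 = ∫₀¹ x(t) dt − x1/2. Then |z1| ≤ (1 − x1²)/4. Moreover the bound is sharp: for every x1 ∈ [−1,1] and every z1 with |z1| ≤ (1 − x1²)/4 there exists such a function x realizing these values of x(1) and ∫₀¹ x dt − x(1)/2. -/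
open MeasureTheory Set

/-- `x : [0,1] → ℝ` is Lipschitz with `x(0) = 0` and a.e. derivative `u` with `|u| ≤ 1`. -/
def AdmissibleX (x u : ℝ → ℝ) : Prop :=
  (∃ K, LipschitzOnWith K x (Icc (0:ℝ) 1)) ∧ Measurable u ∧
  (∀ᵐ t ∂(volume.restrict (Icc (0:ℝ) 1)), |u t| ≤ 1 ∧ HasDerivAt x (u t) t) ∧
  x 0 = 0

/-!
A `K`-Lipschitz function on `[a, b]` lies below `min (f a + K (t - a)) (f b + K (b - t))`, which is
itself `K`-Lipschitz with the same endpoint values and whose graph is a tent, so its integral is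
explicit; applied to `f` and `-f`, this is Iyengar's inequality for the trapezoidal rule. Convex
combinations of the largest and the smallest interpolant attain every intermediate value.
By Rademacher's theorem and the fundamental theorem of calculus for absolutely continuous
functions, admissibility of `x` amounts to `x` being `1`-Lipschitz on `[0, 1]` with `x 0 = 0`.
-/

open scoped NNReal

theorem lipschitzOnWith_uIcc_of_ae_norm_deriv_le {f : ℝ → ℝ} {a b : ℝ} {C : ℝ≥0}
    (hf : AbsolutelyContinuousOnInterval f a b)
    (hderiv : ∀ᵐ t, t ∈ uIcc a b → ‖deriv f t‖ ≤ C) : LipschitzOnWith C f (uIcc a b) := by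
  refine LipschitzOnWith.of_dist_le_mul fun s hs t ht => ?_
  have hsub : uIcc t s ⊆ uIcc a b := uIcc_subset_uIcc ht hs
  rw [dist_eq_norm, Real.dist_eq s t, ← (hf.mono hsub).integral_deriv_eq_sub]
  refine intervalIntegral.norm_integral_le_of_norm_le_const_ae ?_
  filter_upwards [hderiv] with r hr hr_mem
  exact hr (hsub (uIoc_subset_uIcc hr_mem))

theorem convex_setOf_lipschitzWith {X E : Type*} [PseudoMetricSpace X] [SeminormedAddCommGroup E]
    [NormedSpace ℝ E] (K : ℝ≥0) : Convex ℝ {f : X → E | LipschitzWith K f} := by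
  intro f (hf : LipschitzWith K f) g (hg : LipschitzWith K g) s r hs hr hsr
  refine LipschitzWith.of_dist_le_mul fun x y => ?_
  calc dist (s • f x + r • g x) (s • f y + r • g y)
      ≤ dist (s • f x) (s • f y) + dist (r • g x) (r • g y) := dist_add_add_le _ _ _ _
    _ = s * dist (f x) (f y) + r * dist (g x) (g y) := by
        rw [dist_smul₀, dist_smul₀, Real.norm_of_nonneg hs, Real.norm_of_nonneg hr]
    _ ≤ s * (K * dist x y) + r * (K * dist x y) := by
        gcongr
        · exact hf.dist_le_mul x y
        · exact hg.dist_le_mul x y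
    _ = K * dist x y := by rw [← add_mul, hsr, one_mul]

theorem integral_abs_sub_of_mem_Icc {a b c : ℝ} (hc : c ∈ Icc a b) :
    ∫ t in a..b, |t - c| = ((c - a) ^ 2 + (b - c) ^ 2) / 2 := by
  have hcont : Continuous fun t : ℝ => |t - c| := by fun_prop
  have hleft : ∫ t in a..c, |t - c| = (c - a) ^ 2 / 2 := by
    rw [intervalIntegral.integral_of_le hc.1, ← uIoc_of_ge hc.1]
    simpa [one_add_one_eq_two, sub_sq_comm a c] using integral_pow_abs_sub_uIoc (a := c) (b := a) 1
  have hright : ∫ t in c..b, |t - c| = (b - c) ^ 2 / 2 := by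
    rw [intervalIntegral.integral_of_le hc.2, ← uIoc_of_le hc.2]
    simpa [one_add_one_eq_two] using integral_pow_abs_sub_uIoc (a := c) (b := b) 1
  rw [← intervalIntegral.integral_add_adjacent_intervals (hcont.intervalIntegrable a c)
    (hcont.intervalIntegrable c b), hleft, hright, add_div]

/-- The largest `K`-Lipschitz function on `[a, b]` with value `p` at `a` and `q` at `b`, when
`|q - p| ≤ K * (b - a)`. The smallest one is `-maxLipschitzInterpolant K a b (-p) (-q)`. -/
def maxLipschitzInterpolant (K : ℝ≥0) (a b p q t : ℝ) : ℝ :=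
  min (p + K * (t - a)) (q + K * (b - t))

namespace maxLipschitzInterpolant

variable {K : ℝ≥0} {a b p q : ℝ}

theorem lipschitzWith : LipschitzWith K (maxLipschitzInterpolant K a b p q) := by
  have hup : LipschitzWith K fun t : ℝ => p + K * (t - a) :=
    LipschitzWith.of_dist_le_mul fun s t => le_of_eq <| by
      rw [dist_add_left, Real.dist_eq, ← mul_sub, sub_sub_sub_cancel_right, abs_mul,
        NNReal.abs_eq, Real.dist_eq]
  have hdown : LipschitzWith K fun t : ℝ => q + K * (b - t) :=
    LipschitzWith.of_dist_le_mul fun s t => le_of_eq <| by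
      rw [dist_add_left, Real.dist_eq, ← mul_sub, sub_sub_sub_cancel_left, abs_mul,
        NNReal.abs_eq, dist_comm, Real.dist_eq]
  simpa only [max_self] using! hup.min hdown

theorem apply_left (hpq : |q - p| ≤ K * (b - a)) : maxLipschitzInterpolant K a b p q a = p := by
  rw [maxLipschitzInterpolant, sub_self, mul_zero, add_zero]
  exact min_eq_left (by linarith [neg_le_of_abs_le hpq])

theorem apply_right (hpq : |q - p| ≤ K * (b - a)) : maxLipschitzInterpolant K a b p q b = q := by
  rw [maxLipschitzInterpolant, sub_self, mul_zero, add_zero]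
  exact min_eq_right (by linarith [le_of_abs_le hpq])

theorem le_of_lipschitzOnWith {f : ℝ → ℝ} (hf : LipschitzOnWith K f (Icc a b)) {t : ℝ}
    (ht : t ∈ Icc a b) : f t ≤ maxLipschitzInterpolant K a b (f a) (f b) t := by
  have hab : a ≤ b := ht.1.trans ht.2
  apply le_min
  · simpa [Real.dist_eq, abs_of_nonneg (sub_nonneg.2 ht.1)] using
      hf.le_add_mul ht (left_mem_Icc.2 hab)
  · simpa [Real.dist_eq, abs_of_nonpos (sub_nonpos.2 ht.2)] using
      hf.le_add_mul ht (right_mem_Icc.2 hab)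

theorem eq_sub_mul_abs (hK : 0 < K) (t : ℝ) :
    maxLipschitzInterpolant K a b p q t =
      (p + q + K * (b - a)) / 2 - K * |t - ((a + b) / 2 + (q - p) / (2 * K))| := by
  have hK' : (0 : ℝ) < K := hK
  have hdiff : q + K * (b - t) - (p + K * (t - a)) =
      -(2 * K) * (t - ((a + b) / 2 + (q - p) / (2 * K))) := by
    field_simp
    ring
  rw [maxLipschitzInterpolant, inf_eq_half_smul_add_sub_abs_sub' ℝ, hdiff, abs_mul, abs_neg,
    abs_of_pos (mul_pos two_pos hK'), smul_eq_mul]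
  ring

theorem integral_eq (hK : 0 < K) (hpq : |q - p| ≤ K * (b - a)) :
    ∫ t in a..b, maxLipschitzInterpolant K a b p q t =
      (b - a) * ((p + q) / 2) + (K ^ 2 * (b - a) ^ 2 - (q - p) ^ 2) / (4 * K) := by
  have hK' : (0 : ℝ) < K := hK
  have hpeak : (a + b) / 2 + (q - p) / (2 * K) ∈ Icc a b := by
    have hshift : |(q - p) / (2 * K)| ≤ (b - a) / 2 := by
      rw [abs_div, abs_of_pos (mul_pos two_pos hK'), div_le_div_iff₀ (by positivity) two_pos]
      linarith
    constructor <;> linarith [abs_le.1 hshift]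
  simp_rw [eq_sub_mul_abs hK]
  rw [intervalIntegral.integral_sub intervalIntegrable_const
      (Continuous.intervalIntegrable (by fun_prop) _ _), intervalIntegral.integral_const_mul,
    integral_abs_sub_of_mem_Icc hpeak, intervalIntegral.integral_const, smul_eq_mul]
  field_simp
  ring

end maxLipschitzInterpolant

section Iyengar

variable {K : ℝ≥0} {a b : ℝ}

theorem integral_sub_trapezoid_le_of_lipschitzOnWith {f : ℝ → ℝ} (hK : 0 < K) (hab : a ≤ b)
    (hf : LipschitzOnWith K f (Icc a b)) :
    (∫ t in a..b, f t) - (b - a) * ((f a + f b) / 2) ≤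
      (K ^ 2 * (b - a) ^ 2 - (f b - f a) ^ 2) / (4 * K) := by
  have hends : |f b - f a| ≤ K * (b - a) := by
    simpa [Real.dist_eq, abs_of_nonneg (sub_nonneg.2 hab)] using
      hf.dist_le_mul b (right_mem_Icc.2 hab) a (left_mem_Icc.2 hab)
  rw [sub_le_iff_le_add', ← maxLipschitzInterpolant.integral_eq hK hends]
  exact intervalIntegral.integral_mono_on hab (hf.continuousOn.intervalIntegrable_of_Icc hab)
    (maxLipschitzInterpolant.lipschitzWith.continuous.intervalIntegrable a b)
    fun t ht => maxLipschitzInterpolant.le_of_lipschitzOnWith hf ht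

theorem abs_integral_sub_trapezoid_le_of_lipschitzOnWith {f : ℝ → ℝ} (hK : 0 < K) (hab : a ≤ b)
    (hf : LipschitzOnWith K f (Icc a b)) :
    |(∫ t in a..b, f t) - (b - a) * ((f a + f b) / 2)| ≤
      (K ^ 2 * (b - a) ^ 2 - (f b - f a) ^ 2) / (4 * K) := by
  refine abs_le'.2 ⟨integral_sub_trapezoid_le_of_lipschitzOnWith hK hab hf, ?_⟩
  have hneg := integral_sub_trapezoid_le_of_lipschitzOnWith hK hab hf.neg
  simp only [Pi.neg_apply, intervalIntegral.integral_neg, neg_sub_neg, sub_sq_comm (f a)] at hneg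
  linarith

theorem exists_lipschitzWith_integral_sub_trapezoid_eq {p q z : ℝ} (hK : 0 < K)
    (hpq : |q - p| ≤ K * (b - a))
    (hz : |z| ≤ (K ^ 2 * (b - a) ^ 2 - (q - p) ^ 2) / (4 * K)) :
    ∃ f : ℝ → ℝ, LipschitzWith K f ∧ f a = p ∧ f b = q ∧
      (∫ t in a..b, f t) - (b - a) * ((p + q) / 2) = z := by
  set R := (K ^ 2 * (b - a) ^ 2 - (q - p) ^ 2) / (4 * K) with hR
  have hneg : |-q - -p| ≤ K * (b - a) := by rwa [neg_sub_neg, abs_sub_comm]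
  have hz_segment : z ∈ segment ℝ (-R) R := by
    rw [segment_eq_Icc (neg_le_self ((abs_nonneg z).trans hz))]
    exact abs_le.1 hz
  obtain ⟨s, r, hs, hr, hsr, rfl⟩ := hz_segment
  let lower := -maxLipschitzInterpolant K a b (-p) (-q)
  let upper := maxLipschitzInterpolant K a b p q
  have hlower : LipschitzWith K lower := maxLipschitzInterpolant.lipschitzWith.neg
  have hupper : LipschitzWith K upper := maxLipschitzInterpolant.lipschitzWith
  have hlower_integral : ∫ t in a..b, lower t = (b - a) * ((p + q) / 2) - R := by
    simp only [lower, Pi.neg_apply, intervalIntegral.integral_neg,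
      maxLipschitzInterpolant.integral_eq hK hneg, hR]
    ring
  have hupper_integral : ∫ t in a..b, upper t = (b - a) * ((p + q) / 2) + R :=
    maxLipschitzInterpolant.integral_eq hK hpq
  refine ⟨s • lower + r • upper, convex_setOf_lipschitzWith K hlower hupper hs hr hsr, ?_, ?_, ?_⟩
  · simp [lower, upper, maxLipschitzInterpolant.apply_left hneg,
      maxLipschitzInterpolant.apply_left hpq, ← add_mul, hsr]
  · simp [lower, upper, maxLipschitzInterpolant.apply_right hneg,
      maxLipschitzInterpolant.apply_right hpq, ← add_mul, hsr]
  · simp only [Pi.add_apply, Pi.smul_apply, smul_eq_mul]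
    rw [intervalIntegral.integral_add ((hlower.continuous.intervalIntegrable a b).const_mul s)
        ((hupper.continuous.intervalIntegrable a b).const_mul r),
      intervalIntegral.integral_const_mul, intervalIntegral.integral_const_mul,
      hlower_integral, hupper_integral]
    linear_combination (b - a) * ((p + q) / 2) * hsr

end Iyengar

namespace AdmissibleX

theorem lipschitzOnWith {x u : ℝ → ℝ} (h : AdmissibleX x u) :
    LipschitzOnWith 1 x (Icc (0 : ℝ) 1) := by
  obtain ⟨⟨L, hL⟩, -, hderiv, -⟩ := h
  rw [ae_restrict_iff' measurableSet_Icc] at hderiv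
  rw [← uIcc_of_le zero_le_one] at hL hderiv ⊢
  refine lipschitzOnWith_uIcc_of_ae_norm_deriv_le hL.absolutelyContinuousOnInterval ?_
  filter_upwards [hderiv] with t ht ht_mem
  rw [(ht ht_mem).2.deriv]
  exact (ht ht_mem).1

theorem of_lipschitzWith {x : ℝ → ℝ} (hx : LipschitzWith 1 x) (hx_zero : x 0 = 0) :
    AdmissibleX x (deriv x) := by
  refine ⟨⟨1, hx.lipschitzOnWith⟩, measurable_deriv x, ae_restrict_of_ae ?_, hx_zero⟩
  filter_upwards [hx.ae_differentiableAt_real] with t ht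
  exact ⟨norm_deriv_le_of_lipschitz hx, ht.hasDerivAt⟩

end AdmissibleX

/-- The exact range of `z1 = ∫₀¹ x − x(1)/2` over Lipschitz functions with `x(0)=0`,
`|x'| ≤ 1` a.e. and prescribed endpoint `x1 = x(1)`: the bound `|z1| ≤ (1 − x1²)/4`
holds and is sharp. -/
theorem z_coordinate_range :
    (∀ x u : ℝ → ℝ, AdmissibleX x u →
      |(∫ t in (0:ℝ)..1, x t) - x 1 / 2| ≤ (1 - x 1 ^ 2) / 4) ∧
    (∀ x1 z1 : ℝ, x1 ∈ Icc (-1:ℝ) 1 → |z1| ≤ (1 - x1 ^ 2) / 4 →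
      ∃ x u : ℝ → ℝ, AdmissibleX x u ∧ x 1 = x1 ∧
        (∫ t in (0:ℝ)..1, x t) - x 1 / 2 = z1) := by
  constructor
  · intro x u h
    have hx_zero : x 0 = 0 := h.2.2.2
    simpa [hx_zero] using
      abs_integral_sub_trapezoid_le_of_lipschitzOnWith one_pos zero_le_one h.lipschitzOnWith
  · intro x1 z1 hx1 hz1
    obtain ⟨x, hx, hx_zero, hx_one, hz⟩ :=
      exists_lipschitzWith_integral_sub_trapezoid_eq (K := 1) (a := 0) (b := 1) (p := 0) (q := x1)
        (z := z1) one_pos (by simpa using abs_le.2 hx1) (by simpa using hz1)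
    exact ⟨x, deriv x, AdmissibleX.of_lipschitzWith hx hx_zero, hx_one, by simpa [hx_one] using hz⟩
end

section
/- Fix Tb, T1, T2 with 0 < Tb ≤ T2 and 0 < T1, let Te = T1·(T2 − Tb)/(T2 + Tb) and T = Tb + T1 + T2 + Te. Consider the Cartan control system with u2 ≡ 1 and the two piecewise constant controls: u1 equal to 1 on [0,Tb), −1 on [Tb, Tb+T1), 1 on [Tb+T1, Tb+T1+T2), −1 on [Tb+T1+T2, T]; and ū1 equal to −1 on [0,Te), 1 on [Te, Te+T2), −1 on [Te+T2, Te+T2+T1), 1 on [Te+T2+T1, T]. Then the trajectories of the Cartan system from the origin with controls (u1, 1) and (ū1, 1) have the same endpoint at time T, and the z-coordinate of this common endpoint equals 0. -/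
open MeasureTheory Set

/-- A Lipschitz trajectory of the Cartan control system on `[0,T]` with a given control. -/
def IsTraj (T : ℝ) (x y z v w u1 u2 : ℝ → ℝ) : Prop :=
  (∃ K, LipschitzOnWith K (fun t => (x t, y t, z t, v t, w t)) (Icc 0 T)) ∧
  (∀ᵐ t ∂(volume.restrict (Icc 0 T)), CartanOde x y z v w u1 u2 t)

/-- The bang-bang control `1, −1, 1, −1` with durations `Tb, T1, T2` and the rest. -/
noncomputable def bangControl (Tb T1 T2 : ℝ) (t : ℝ) : ℝ :=
  if t < Tb then 1 else if t < Tb + T1 then -1 else if t < Tb + T1 + T2 then 1 else -1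

/-- The symmetric bang-bang control `−1, 1, −1, 1` with durations `Te, T2, T1` and the rest. -/
noncomputable def bangControl' (Te T2 T1 : ℝ) (t : ℝ) : ℝ :=
  if t < Te then -1 else if t < Te + T2 then 1 else if t < Te + T2 + T1 then -1 else 1

/-!
The control `ū₁` is `u₁` run backwards. For the trajectory of an arbitrary control from the origin,
ending at `(x, y, z, v, w)`, the reversed control ends at `(x, y, -z, v - x z, w - y z)`: running a
trajectory backwards and applying the dilation by `-1` gives a trajectory of the reversed control,
which left invariance moves to the origin. So the two endpoints agree as soon as `z = 0`. As `z` is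
the area swept out from the origin in the `(x, y)`-plane, it is a sum of signed triangle areas, one
for each piece of the control (the first is degenerate):
`z = Tb * T1 - T1 * T2 + (T2 + Tb) * Te`, and `Te` is chosen to make this vanish.
-/

section Calculus

lemma exists_lipschitzOnWith_contDiff_comp {α E F : Type*} [PseudoEMetricSpace α]
    [NormedAddCommGroup E] [NormedSpace ℝ E] [NormedAddCommGroup F] [NormedSpace ℝ F]
    {φ : E → F} (hφ : ContDiff ℝ 1 φ) {f : α → E} {s : Set α} (hs : IsCompact s)
    (hf : ∃ K, LipschitzOnWith K f s) : ∃ K, LipschitzOnWith K (fun t => φ (f t)) s := by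
  obtain ⟨K, hK⟩ := hf
  obtain ⟨C, hC⟩ := hφ.locallyLipschitz.locallyLipschitzOn.exists_lipschitzOnWith_of_compact
    (hs.image_of_continuousOn hK.continuousOn)
  exact ⟨C * K, hC.comp hK (mapsTo_image f s)⟩

lemma eqOn_of_ae_hasDerivAt_eq {F : Type*} [NormedAddCommGroup F] [NormedSpace ℝ F]
    {f g : ℝ → F} {a b : ℝ} (hf : AbsolutelyContinuousOnInterval f a b)
    (hg : AbsolutelyContinuousOnInterval g a b) (ha : f a = g a)
    (hfg : ∀ᵐ t ∂volume.restrict (uIcc a b), ∃ d, HasDerivAt f d t ∧ HasDerivAt g d t) :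
    EqOn f g (uIcc a b) := by
  obtain ⟨C, hC⟩ := (hf.sub hg).const_of_ae_hasDerivAt_zero <| by
    filter_upwards [(ae_restrict_iff' measurableSet_uIcc).1 hfg] with t ht hmem
    obtain ⟨d, hfd, hgd⟩ := ht hmem
    simpa using hfd.sub hgd
  have hC0 : C = 0 := by rw [← hC a left_mem_uIcc, Pi.sub_apply, ha, sub_self]
  exact fun t ht => sub_eq_zero.1 ((hC t ht).trans hC0)

end Calculus

section Trajectories

/-- The product `g * q` in the Cartan group, the free nilpotent Lie group of rank 2 and step 3, in
the coordinates `(x, y, z, v, w)` of the control system. It is the group law with identity `0` whose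
left translations preserve the system. -/
noncomputable def cartanMul (g q : ℝ × ℝ × ℝ × ℝ × ℝ) : ℝ × ℝ × ℝ × ℝ × ℝ :=
  (g.1 + q.1,
    g.2.1 + q.2.1,
    g.2.2.1 + q.2.2.1 + (g.1 * q.2.1 - g.2.1 * q.1) / 2,
    g.2.2.2.1 + q.2.2.2.1 + (g.1 ^ 2 + g.2.1 ^ 2) / 2 * q.2.1
      + g.1 * (q.2.2.1 + q.1 * q.2.1 / 2) + g.2.1 * q.2.1 ^ 2 / 2,
    g.2.2.2.2 + q.2.2.2.2 - (g.1 ^ 2 + g.2.1 ^ 2) / 2 * q.1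
      + g.2.1 * (q.2.2.1 - q.1 * q.2.1 / 2) - g.1 * q.1 ^ 2 / 2)

variable {T : ℝ} {x y z v w u₁ u₂ : ℝ → ℝ} {x' y' z' v' w' u₁' u₂' : ℝ → ℝ}

namespace IsTraj

lemma congr_control (h : IsTraj T x y z v w u₁ u₂)
    (h₁ : u₁ =ᵐ[volume.restrict (Icc 0 T)] u₁') (h₂ : u₂ =ᵐ[volume.restrict (Icc 0 T)] u₂') :
    IsTraj T x y z v w u₁' u₂' := by
  refine ⟨h.1, ?_⟩
  filter_upwards [h.2, h₁, h₂] with t ht e₁ e₂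
  simpa only [CartanOde, e₁, e₂] using ht

lemma absolutelyContinuousOnInterval_comp (h : IsTraj T x y z v w u₁ u₂) {a b : ℝ}
    (hab : uIcc a b ⊆ Icc 0 T) {F : Type*} [NormedAddCommGroup F] [NormedSpace ℝ F]
    {φ : ℝ × ℝ × ℝ × ℝ × ℝ → F} (hφ : ContDiff ℝ 1 φ) :
    AbsolutelyContinuousOnInterval (fun t => φ (x t, y t, z t, v t, w t)) a b := by
  obtain ⟨K, hK⟩ := exists_lipschitzOnWith_contDiff_comp hφ isCompact_Icc h.1
  exact (hK.mono hab).absolutelyContinuousOnInterval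

theorem eqOn_of_start_eq (h : IsTraj T x y z v w u₁ u₂) (h' : IsTraj T x' y' z' v' w' u₁ u₂)
    (hstart : (x 0, y 0, z 0, v 0, w 0) = (x' 0, y' 0, z' 0, v' 0, w' 0)) :
    EqOn (fun t => (x t, y t, z t, v t, w t)) (fun t => (x' t, y' t, z' t, v' t, w' t))
      (Icc 0 T) := by
  intro t ht
  simp only [Prod.mk.injEq] at hstart
  obtain ⟨hx₀, hy₀, hz₀, hv₀, hw₀⟩ := hstart
  have hI : uIcc 0 T = Icc 0 T := uIcc_of_le (ht.1.trans ht.2)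
  have coordEq {φ : ℝ × ℝ × ℝ × ℝ × ℝ → ℝ} (hφ : ContDiff ℝ 1 φ) :=
    eqOn_of_ae_hasDerivAt_eq (h.absolutelyContinuousOnInterval_comp hI.subset hφ)
      (h'.absolutelyContinuousOnInterval_comp hI.subset hφ)
  rw [hI] at coordEq
  have hx : EqOn x x' (Icc 0 T) := coordEq (φ := fun q => q.1) (by fun_prop) hx₀ <| by
    filter_upwards [h.2, h'.2] with t ht ht' using ⟨_, ht.1, ht'.1⟩
  have hy : EqOn y y' (Icc 0 T) := coordEq (φ := fun q => q.2.1) (by fun_prop) hy₀ <| by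
    filter_upwards [h.2, h'.2] with t ht ht' using ⟨_, ht.2.1, ht'.2.1⟩
  have hode : ∀ᵐ t ∂volume.restrict (Icc 0 T),
      CartanOde x y z v w u₁ u₂ t ∧ CartanOde x' y' z' v' w' u₁ u₂ t ∧
        x t = x' t ∧ y t = y' t := by
    filter_upwards [h.2, h'.2, ae_restrict_mem measurableSet_Icc] with t ht ht' hmem
      using ⟨ht, ht', hx hmem, hy hmem⟩
  have hz : EqOn z z' (Icc 0 T) := coordEq (φ := fun q => q.2.2.1) (by fun_prop) hz₀ <| by
    filter_upwards [hode] with t ⟨ht, ht', ex, ey⟩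
    exact ⟨_, ht.2.2.1, ex ▸ ey ▸ ht'.2.2.1⟩
  have hv : EqOn v v' (Icc 0 T) := coordEq (φ := fun q => q.2.2.2.1) (by fun_prop) hv₀ <| by
    filter_upwards [hode] with t ⟨ht, ht', ex, ey⟩
    exact ⟨_, ht.2.2.2.1, ex ▸ ey ▸ ht'.2.2.2.1⟩
  have hw : EqOn w w' (Icc 0 T) := coordEq (φ := fun q => q.2.2.2.2) (by fun_prop) hw₀ <| by
    filter_upwards [hode] with t ⟨ht, ht', ex, ey⟩
    exact ⟨_, ht.2.2.2.2, ex ▸ ey ▸ ht'.2.2.2.2⟩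
  simp only [hx ht, hy ht, hz ht, hv ht, hw ht]

theorem leftTranslate (h : IsTraj T x y z v w u₁ u₂) (g : ℝ × ℝ × ℝ × ℝ × ℝ) :
    let q t := cartanMul g (x t, y t, z t, v t, w t)
    IsTraj T (fun t => (q t).1) (fun t => (q t).2.1) (fun t => (q t).2.2.1)
      (fun t => (q t).2.2.2.1) (fun t => (q t).2.2.2.2) u₁ u₂ := by
  obtain ⟨a, b, c, d, e⟩ := g
  have hsmooth : ContDiff ℝ 1 (cartanMul (a, b, c, d, e)) := by
    unfold cartanMul
    fun_prop
  refine ⟨exists_lipschitzOnWith_contDiff_comp hsmooth isCompact_Icc h.1, ?_⟩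
  filter_upwards [h.2] with t ⟨hx, hy, hz, hv, hw⟩
  have hxy := (hx.mul hy).div_const 2
  refine ⟨hx.const_add a, hy.const_add b, ?_, ?_, ?_⟩
  · refine ((hz.const_add c).add
      (((hy.const_mul a).sub (hx.const_mul b)).div_const 2)).congr_deriv ?_
    simp only [cartanMul]
    ring
  · refine ((((hv.const_add d).add (hy.const_mul _)).add ((hz.add hxy).const_mul a)).add
      (((hy.pow 2).const_mul b).div_const 2)).congr_deriv ?_
    simp only [cartanMul]
    push_cast
    ring
  · refine ((((hw.const_add e).sub (hx.const_mul _)).add ((hz.sub hxy).const_mul b)).sub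
      (((hx.pow 2).const_mul a).div_const 2)).congr_deriv ?_
    simp only [cartanMul]
    push_cast
    ring

-- Running time backwards flips the sign of the control; the group dilation by `-1`, under which the
-- coordinates have weights 1, 1, 2, 3, 3, flips it back.
theorem timeReversal (h : IsTraj T x y z v w u₁ u₂) :
    IsTraj T (fun t => -x (T - t)) (fun t => -y (T - t)) (fun t => z (T - t))
      (fun t => -v (T - t)) (fun t => -w (T - t))
      (fun t => u₁ (T - t)) (fun t => u₂ (T - t)) := by
  have hpre : (fun t => T - t) ⁻¹' Icc 0 T = Icc 0 T := by simp
  constructor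
  · have hmaps : MapsTo (fun t => T - t) (Icc 0 T) (Icc 0 T) := hpre.ge
    obtain ⟨K, hK⟩ := h.1
    have hsub : LipschitzOnWith 1 (fun t => T - t) (Icc 0 T) :=
      (IsometryEquiv.subLeft T).isometry.lipschitz.lipschitzOnWith
    exact exists_lipschitzOnWith_contDiff_comp
      (φ := fun q : ℝ × ℝ × ℝ × ℝ × ℝ => (-q.1, -q.2.1, q.2.2.1, -q.2.2.2.1, -q.2.2.2.2))
      (by fun_prop) isCompact_Icc ⟨_, hK.comp hsub hmaps⟩
  · have hmp := (volume.measurePreserving_sub_left T).restrict_preimage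
      (measurableSet_Icc (a := (0 : ℝ)) (b := T))
    rw [hpre] at hmp
    filter_upwards [hmp.quasiMeasurePreserving.ae h.2] with t ⟨hx, hy, hz, hv, hw⟩
    have hrev {f : ℝ → ℝ} {f' : ℝ} (hf : HasDerivAt f f' (T - t)) :
        HasDerivAt (fun s => f (T - s)) (-f') t := hf.comp_const_sub T t
    exact ⟨(hrev hx).neg.congr_deriv (by ring), (hrev hy).neg.congr_deriv (by ring),
      (hrev hz).congr_deriv (by ring), (hrev hv).neg.congr_deriv (by ring),
      (hrev hw).neg.congr_deriv (by ring)⟩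

theorem endpoint_of_reversed_control (hT : 0 ≤ T) (h : IsTraj T x y z v w u₁ u₂)
    (hstart : (x 0, y 0, z 0, v 0, w 0) = (0, 0, 0, 0, 0))
    (h' : IsTraj T x' y' z' v' w' (fun t => u₁ (T - t)) (fun t => u₂ (T - t)))
    (hstart' : (x' 0, y' 0, z' 0, v' 0, w' 0) = (0, 0, 0, 0, 0)) :
    (x' T, y' T, z' T, v' T, w' T) =
      (x T, y T, -z T, v T - x T * z T, w T - y T * z T) := by
  have hend := (h'.leftTranslate (-x T, -y T, z T, -v T, -w T)).eqOn_of_start_eq h.timeReversal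
    (by simp_all [cartanMul]) (right_mem_Icc.2 hT)
  simp only [cartanMul, Prod.mk.injEq, sub_self] at hstart hend ⊢
  obtain ⟨hx₀, hy₀, hz₀, hv₀, hw₀⟩ := hstart
  obtain ⟨hx, hy, hz, hv, hw⟩ := hend
  have hx : x' T = x T := by linarith
  have hy : y' T = y T := by linarith
  rw [hx, hy] at hz hv hw
  have hz : z' T = -z T := by linarith
  rw [hz] at hv hw
  exact ⟨hx, hy, hz, by linear_combination hv - hv₀, by linear_combination hw - hw₀⟩

lemma endpoint_of_const_control (h : IsTraj T x y z v w u₁ u₂) {a b c₁ c₂ : ℝ} (ha : 0 ≤ a)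
    (hab : a ≤ b) (hb : b ≤ T) (hu₁ : ∀ t ∈ Ioo a b, u₁ t = c₁) (hu₂ : ∀ t ∈ Ioo a b, u₂ t = c₂) :
    x b = x a + c₁ * (b - a) ∧ y b = y a + c₂ * (b - a) ∧
      z b = z a + (c₂ * x a - c₁ * y a) / 2 * (b - a) := by
  have hI : uIcc a b = Icc a b := uIcc_of_le hab
  have hsub : Icc a b ⊆ Icc 0 T := Icc_subset_Icc ha hb
  have hode : ∀ᵐ t ∂volume.restrict (Icc a b),
      CartanOde x y z v w (fun _ => c₁) (fun _ => c₂) t := by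
    rw [← restrict_Ioo_eq_restrict_Icc]
    filter_upwards [ae_restrict_of_ae_restrict_of_subset (Ioo_subset_Icc_self.trans hsub) h.2,
      ae_restrict_mem measurableSet_Ioo] with t ht hmem
    simpa only [CartanOde, hu₁ t hmem, hu₂ t hmem] using ht
  have hline (p m t : ℝ) : HasDerivAt (fun s => p + m * (s - a)) m t := by
    simpa using (((hasDerivAt_id t).sub_const a).const_mul m).const_add p
  have coordEq {φ : ℝ × ℝ × ℝ × ℝ × ℝ → ℝ} (hφ : ContDiff ℝ 1 φ) (m : ℝ) :=
    eqOn_of_ae_hasDerivAt_eq (h.absolutelyContinuousOnInterval_comp (hI.trans_subset hsub) hφ)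
      (g := fun t => φ (x a, y a, z a, v a, w a) + m * (t - a))
      (ContDiff.contDiffOn (by fun_prop)).absolutelyContinuousOnInterval (by simp)
  rw [hI] at coordEq
  have hx : EqOn x (fun t => x a + c₁ * (t - a)) (Icc a b) :=
    coordEq (φ := fun q => q.1) (by fun_prop) c₁ <| by
      filter_upwards [hode] with t ht using ⟨_, ht.1, hline _ _ t⟩
  have hy : EqOn y (fun t => y a + c₂ * (t - a)) (Icc a b) :=
    coordEq (φ := fun q => q.2.1) (by fun_prop) c₂ <| by
      filter_upwards [hode] with t ht using ⟨_, ht.2.1, hline _ _ t⟩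
  have hz : EqOn z (fun t => z a + (c₂ * x a - c₁ * y a) / 2 * (t - a)) (Icc a b) :=
    coordEq (φ := fun q => q.2.2.1) (by fun_prop) _ <| by
      filter_upwards [hode, ae_restrict_mem measurableSet_Icc] with t ht hmem
      refine ⟨_, ht.2.2.1.congr_deriv ?_, hline _ _ t⟩
      rw [hx hmem, hy hmem]
      ring
  have hb : b ∈ Icc a b := right_mem_Icc.2 hab
  exact ⟨hx hb, hy hb, hz hb⟩

end IsTraj

end Trajectories

section BangBang

lemma bangControl_sub_ae_eq_bangControl' {Tb T1 T2 Te T : ℝ} (hT1 : 0 ≤ T1) (hT2 : 0 ≤ T2)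
    (hT : T = Tb + T1 + T2 + Te) :
    (fun t => bangControl Tb T1 T2 (T - t)) =ᵐ[volume] bangControl' Te T2 T1 := by
  have hswitch : ∀ᵐ t : ℝ, t ∉ ({Te, Te + T2, Te + T2 + T1} : Set ℝ) :=
    (Set.toFinite _).countable.ae_notMem volume
  filter_upwards [hswitch] with t ht
  simp only [mem_insert_iff, mem_singleton_iff, not_or] at ht
  obtain ⟨h1, h2, h3⟩ := ht
  unfold bangControl bangControl'
  grind

lemma IsTraj.z_eq_of_bangControl {Tb T1 T2 Te T : ℝ} (hTb : 0 ≤ Tb) (hT1 : 0 ≤ T1)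
    (hT2 : 0 ≤ T2) (hTe : 0 ≤ Te) (hT : T = Tb + T1 + T2 + Te) {x y z v w : ℝ → ℝ}
    (h : IsTraj T x y z v w (bangControl Tb T1 T2) (fun _ => 1))
    (hx₀ : x 0 = 0) (hy₀ : y 0 = 0) (hz₀ : z 0 = 0) :
    z T = Te * (T2 + Tb) - T1 * (T2 - Tb) := by
  obtain ⟨hx₁, hy₁, hz₁⟩ := h.endpoint_of_const_control (a := 0) (b := Tb) (c₁ := 1) le_rfl hTb
    (by linarith) (fun t ht => by grind [bangControl]) (fun _ _ => rfl)
  obtain ⟨hx₂, hy₂, hz₂⟩ := h.endpoint_of_const_control (a := Tb) (b := Tb + T1) (c₁ := -1) hTb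
    (by linarith) (by linarith) (fun t ht => by grind [bangControl]) (fun _ _ => rfl)
  obtain ⟨hx₃, hy₃, hz₃⟩ := h.endpoint_of_const_control (a := Tb + T1) (b := Tb + T1 + T2) (c₁ := 1)
    (by linarith) (by linarith) (by linarith) (fun t ht => by grind [bangControl]) (fun _ _ => rfl)
  obtain ⟨-, -, hz₄⟩ := h.endpoint_of_const_control (a := Tb + T1 + T2) (b := T) (c₁ := -1)
    (by linarith) (by linarith) le_rfl (fun t ht => by grind [bangControl]) (fun _ _ => rfl)
  rw [hz₄, hz₃, hz₂, hz₁, hx₃, hy₃, hx₂, hy₂, hx₁, hy₁, hx₀, hy₀, hz₀, hT]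
  ring

end BangBang

/-- For `Te = T1·(T2 − Tb)/(T2 + Tb)` the two symmetric bang-bang trajectories with
`u2 ≡ 1` from the origin reach the same endpoint at time `T = Tb + T1 + T2 + Te`,
and the `z`-coordinate of this common endpoint vanishes. -/
theorem bang_bang_endpoint_coincidence
    (Tb T1 T2 Te T : ℝ)
    (hTb : 0 < Tb) (hTbT2 : Tb ≤ T2) (hT1 : 0 < T1)
    (hTe : Te = T1 * (T2 - Tb) / (T2 + Tb))
    (hT : T = Tb + T1 + T2 + Te)
    (x y z v w : ℝ → ℝ)
    (htraj : IsTraj T x y z v w (bangControl Tb T1 T2) (fun _ => 1))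
    (hstart : (x 0, y 0, z 0, v 0, w 0) = (0, 0, 0, 0, 0))
    (x' y' z' v' w' : ℝ → ℝ)
    (htraj' : IsTraj T x' y' z' v' w' (bangControl' Te T2 T1) (fun _ => 1))
    (hstart' : (x' 0, y' 0, z' 0, v' 0, w' 0) = (0, 0, 0, 0, 0)) :
    (x T, y T, z T, v T, w T) = (x' T, y' T, z' T, v' T, w' T) ∧ z T = 0 := by
  have hT2 : 0 < T2 := hTb.trans_le hTbT2
  have hTe₀ : 0 ≤ Te :=
    hTe ▸ div_nonneg (mul_nonneg hT1.le (sub_nonneg.2 hTbT2)) (add_pos hT2 hTb).le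
  have hz : z T = 0 := by
    obtain ⟨hx₀, hy₀, hz₀, -, -⟩ := by simpa only [Prod.mk.injEq] using hstart
    rw [htraj.z_eq_of_bangControl hTb.le hT1.le hT2.le hTe₀ hT hx₀ hy₀ hz₀, hTe,
      div_mul_cancel₀ _ (add_pos hT2 hTb).ne', sub_self]
  have hreversed : IsTraj T x' y' z' v' w' (fun t => bangControl Tb T1 T2 (T - t)) (fun _ => 1) :=
    htraj'.congr_control
      (ae_restrict_of_ae (bangControl_sub_ae_eq_bangControl' hT1.le hT2.le hT).symm) .rfl
  have hend := htraj.endpoint_of_reversed_control (by linarith) hstart hreversed hstart'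
  exact ⟨by simp [hend, hz], hz⟩
end
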